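/- arXiv:1307.4974 — 6 statements merged into one kernel-verified Lean document; each statement's English description precedes it below -/
import Mathlib

section
/- Let K be a field and let f = (f_1,...,f_m) and g = (g_1,...,g_m) be m-tuples of polynomials of total degree at most 2 in K[x_1,...,x_n]. Then there exist A in GL_n(K) and b in K^n with g_i(x) = f_i(Ax + b) for all i if and only if there exists A' in GL_{n+1}(K) such that, writing x* = (x_0,x_1,...,x_n), one has x_0^2 = ((A'x*)_0)^2 and g_i*(x*) = f_i*(A'·x*) for all i, where f_i* and g_i* denote the degree-2 homogenizations of f_i and g_i with respect to the new variable x_0. -/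
open MvPolynomial

/-- The degree-2 homogenization of a polynomial `p` of total degree at most 2,
with respect to a new variable `x₀` (placed at index `0` of `Fin (n+1)`):
`p⋆(x₀,x₁,…,xₙ) = x₀² ⬝ p(x₁/x₀,…,xₙ/x₀)`. -/
noncomputable def homog2 {K : Type*} [Field K] {n : ℕ} (p : MvPolynomial (Fin n) K) :
    MvPolynomial (Fin (n + 1)) K :=
  ∑ mo ∈ p.support,
    MvPolynomial.monomial (Finsupp.cons (2 - mo.sum fun _ e => e) mo) (p.coeff mo)

/-!
In homogeneous coordinates the affine map `x ↦ A x + b` is the linear map with matrix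
`[[1, 0], [b, A]]`, and a polynomial of degree at most `d` is determined by its degree-`d`
homogenization; so an affine equivalence is the same as a linear equivalence of the homogenizations
by a matrix of this shape. Preserving `x₀ᵈ` forces the first row of a matrix to be `(u, 0, …, 0)`
with `uᵈ = 1`, so the matrix is `u` times one of this shape, and the factor `u` acts on forms of
degree `d` as `uᵈ = 1`.
-/

section Homogenization

variable {R : Type*} [CommSemiring R] {n : ℕ}

/-- The homogenization `x₀ᵈ p(x₁/x₀, …, xₙ/x₀)` of a polynomial `p` in degree `d`, as a linear map;
the new variable has index `0`. On monomials of degree above `d` the truncated exponent `d - deg`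
is `0`, so the result is homogeneous of degree `d` only for `p` of total degree at most `d`. -/
noncomputable def homogenize (d : ℕ) : MvPolynomial (Fin n) R →ₗ[R] MvPolynomial (Fin (n + 1)) R :=
  (basisMonomials (Fin n) R).constr R fun s => monomial (Finsupp.cons (d - s.degree) s) 1

/-- The dehomogenization `P(1, x₁, …, xₙ)` of a polynomial `P` with respect to the variable of
index `0`. -/
noncomputable def dehomogenize : MvPolynomial (Fin (n + 1)) R →ₐ[R] MvPolynomial (Fin n) R :=
  aeval (Fin.cons 1 X : Fin (n + 1) → MvPolynomial (Fin n) R)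

theorem homogenize_monomial (d : ℕ) (s : Fin n →₀ ℕ) (c : R) :
    homogenize d (monomial s c) = monomial (Finsupp.cons (d - s.degree) s) c := by
  have hs : monomial s c = c • basisMonomials (Fin n) R s := by simp [smul_monomial]
  rw [hs, map_smul, homogenize, Module.Basis.constr_basis, smul_monomial, smul_eq_mul, mul_one]

theorem homogenize_eq_sum (d : ℕ) (p : MvPolynomial (Fin n) R) :
    homogenize d p =
      ∑ s ∈ p.support, monomial (Finsupp.cons (d - s.degree) s) (p.coeff s) := by
  conv_lhs => rw [p.as_sum, map_sum]
  simp only [homogenize_monomial]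

theorem dehomogenize_monomial (s : Fin (n + 1) →₀ ℕ) (c : R) :
    dehomogenize (monomial s c) = monomial s.tail c := by
  rw [dehomogenize, aeval_monomial, monomial_eq, Finsupp.prod_fintype _ _ (by simp),
    Finsupp.prod_fintype _ _ (by simp), Fin.prod_univ_succ]
  simp [Finsupp.tail_apply, algebraMap_eq]

theorem degree_finsuppCons (a : ℕ) (s : Fin n →₀ ℕ) : (Finsupp.cons a s).degree = a + s.degree := by
  simp [Finsupp.degree_eq_sum, Fin.sum_univ_succ]

theorem isHomogeneous_homogenize {d : ℕ} {p : MvPolynomial (Fin n) R} (hp : p.totalDegree ≤ d) :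
    (homogenize d p).IsHomogeneous d := by
  rw [homogenize_eq_sum]
  refine IsHomogeneous.sum _ _ _ fun s hs => isHomogeneous_monomial _ ?_
  rw [degree_finsuppCons]
  exact Nat.sub_add_cancel ((le_totalDegree hs).trans hp)

theorem dehomogenize_homogenize (d : ℕ) (p : MvPolynomial (Fin n) R) :
    dehomogenize (homogenize d p) = p := by
  simp only [homogenize_eq_sum, map_sum, dehomogenize_monomial, Finsupp.tail_cons,
    support_sum_monomial_coeff]

theorem homogenize_dehomogenize {d : ℕ} {P : MvPolynomial (Fin (n + 1)) R}
    (hP : P.IsHomogeneous d) : homogenize d (dehomogenize P) = P := by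
  conv_lhs => rw [P.as_sum, map_sum, map_sum]
  conv_rhs => rw [P.as_sum]
  refine Finset.sum_congr rfl fun s hs => ?_
  have hdeg : s 0 + s.tail.degree = d := by
    rw [← degree_finsuppCons, Finsupp.cons_tail]
    exact (hP.degree_eq_sum_deg_support hs).symm
  rw [dehomogenize_monomial, homogenize_monomial, ← hdeg, Nat.add_sub_cancel, Finsupp.cons_tail]

theorem homog2_eq_homogenize {K : Type*} [Field K] {n : ℕ} (p : MvPolynomial (Fin n) K) :
    homog2 p = homogenize 2 p :=
  (homogenize_eq_sum 2 p).symm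

end Homogenization

section Substitution

variable {R : Type*} [CommSemiring R] {σ τ : Type*} [Fintype τ]

/-- The linear change of variables `P(x) ↦ P(M x)`. -/
noncomputable def linSubst (M : Matrix σ τ R) : MvPolynomial σ R →ₐ[R] MvPolynomial τ R :=
  aeval fun j => ∑ k, C (M j k) * X k

/-- The affine change of variables `p(x) ↦ p(A x + b)`. -/
noncomputable def affineSubst (A : Matrix σ τ R) (b : σ → R) :
    MvPolynomial σ R →ₐ[R] MvPolynomial τ R :=
  aeval fun j => (∑ k, C (A j k) * X k) + C (b j)

theorem linSubst_X (M : Matrix σ τ R) (j : σ) : linSubst M (X j) = ∑ k, C (M j k) * X k :=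
  aeval_X _ _

theorem isHomogeneous_linSubst (M : Matrix σ τ R) {d : ℕ} {P : MvPolynomial σ R}
    (hP : P.IsHomogeneous d) : (linSubst M P).IsHomogeneous d := by
  rw [← one_mul d]
  exact hP.aeval _ fun j => IsHomogeneous.sum _ _ _ fun k _ => isHomogeneous_C_mul_X _ _

theorem aeval_smul_of_isHomogeneous {S : Type*} [CommSemiring S] [Algebra R S] {d : ℕ}
    {P : MvPolynomial σ R} (hP : P.IsHomogeneous d) (c : R) (v : σ → S) :
    aeval (c • v) P = c ^ d • aeval v P := by
  rw [P.as_sum, map_sum, map_sum, Finset.smul_sum]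
  refine Finset.sum_congr rfl fun s hs => ?_
  have hdeg : d = ∑ i ∈ s.support, s i := hP.degree_eq_sum_deg_support hs
  simp only [aeval_monomial, Finsupp.prod, Pi.smul_apply, smul_pow]
  rw [Finset.prod_smul, Finset.prod_pow_eq_pow_sum, ← hdeg, mul_smul_comm]

theorem linSubst_smul_of_isHomogeneous {d : ℕ} {P : MvPolynomial σ R} (hP : P.IsHomogeneous d)
    (c : R) (M : Matrix σ τ R) : linSubst (c • M) P = c ^ d • linSubst M P := by
  rw [linSubst, linSubst, ← aeval_smul_of_isHomogeneous hP]
  congr 2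
  ext1 j
  simp [Finset.smul_sum, smul_eq_C_mul, mul_assoc]

theorem aeval_single_linSubst [DecidableEq τ] (M : Matrix σ τ R) (k : τ) (P : MvPolynomial σ R) :
    aeval (Pi.single k 1 : τ → R) (linSubst M P) = aeval (fun j => M j k) P := by
  suffices (aeval (Pi.single k 1 : τ → R)).comp (linSubst M) = aeval fun j => M j k
    from DFunLike.congr_fun this P
  ext1 j
  simp [linSubst_X, Pi.single_apply]

end Substitution

section AffineMatrix

variable {R : Type*} {m n : ℕ}

/-- The matrix `[[1, 0], [b, A]]` of the affine map `x ↦ A x + b` in homogeneous coordinates. -/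
def affineMatrix [Zero R] [One R] (A : Matrix (Fin m) (Fin n) R) (b : Fin m → R) :
    Matrix (Fin (m + 1)) (Fin (n + 1)) R :=
  Matrix.of (Fin.cons (Fin.cons 1 0) fun j => Fin.cons (b j) (A j))

theorem det_affineMatrix [CommRing R] (A : Matrix (Fin n) (Fin n) R) (b : Fin n → R) :
    (affineMatrix A b).det = A.det := by
  have hcorner : affineMatrix A b 0 0 = 1 := rfl
  have hrow (k : Fin n) : affineMatrix A b 0 k.succ = 0 := rfl
  have hminor : (affineMatrix A b).submatrix Fin.succ Fin.succ = A := rfl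
  simp [Matrix.det_succ_row_zero, Fin.sum_univ_succ, hcorner, hrow, hminor]

theorem isUnit_affineMatrix_iff [CommRing R] {A : Matrix (Fin n) (Fin n) R} {b : Fin n → R} :
    IsUnit (affineMatrix A b) ↔ IsUnit A := by
  rw [Matrix.isUnit_iff_isUnit_det, Matrix.isUnit_iff_isUnit_det, det_affineMatrix]

theorem exists_eq_smul_affineMatrix [MonoidWithZero R]
    {M : Matrix (Fin (m + 1)) (Fin (n + 1)) R} {u : Rˣ} (hM : M 0 = Pi.single 0 (u : R)) :
    ∃ A b, M = u • affineMatrix A b := by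
  refine ⟨u⁻¹ • M.submatrix Fin.succ Fin.succ, fun j => u⁻¹ • M j.succ 0, ?_⟩
  ext j k
  cases j using Fin.cases <;> cases k using Fin.cases <;>
    simp [affineMatrix, hM, Units.smul_def]

variable [CommSemiring R]

theorem linSubst_affineMatrix_X_zero (A : Matrix (Fin m) (Fin n) R) (b : Fin m → R) :
    linSubst (affineMatrix A b) (X 0) = X 0 := by
  simp [linSubst_X, Fin.sum_univ_succ, affineMatrix]

theorem dehomogenize_linSubst_affineMatrix (A : Matrix (Fin m) (Fin n) R) (b : Fin m → R)
    (P : MvPolynomial (Fin (m + 1)) R) :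
    dehomogenize (linSubst (affineMatrix A b) P) = affineSubst A b (dehomogenize P) := by
  suffices dehomogenize.comp (linSubst (affineMatrix A b)) = (affineSubst A b).comp dehomogenize
    from DFunLike.congr_fun this P
  ext1 j
  cases j using Fin.cases <;>
    simp [dehomogenize, affineSubst, linSubst_X, Fin.sum_univ_succ, affineMatrix, add_comm]

theorem homogenize_eq_linSubst_affineMatrix_iff {d : ℕ} {f : MvPolynomial (Fin m) R}
    (hf : f.totalDegree ≤ d) (g : MvPolynomial (Fin n) R) (A : Matrix (Fin m) (Fin n) R)
    (b : Fin m → R) :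
    homogenize d g = linSubst (affineMatrix A b) (homogenize d f) ↔ g = affineSubst A b f := by
  have hdehom : dehomogenize (linSubst (affineMatrix A b) (homogenize d f)) =
      affineSubst A b f := by
    rw [dehomogenize_linSubst_affineMatrix, dehomogenize_homogenize]
  constructor
  · intro h
    rw [← hdehom, ← h, dehomogenize_homogenize]
  · rintro rfl
    rw [← hdehom, homogenize_dehomogenize (isHomogeneous_linSubst _ (isHomogeneous_homogenize hf))]

end AffineMatrix

theorem exists_unit_row_zero_of_linSubst_X_zero_pow {R : Type*} [CommSemiring R] [IsReduced R]
    {m n d : ℕ} (hd : d ≠ 0) {M : Matrix (Fin (m + 1)) (Fin (n + 1)) R}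
    (h : X 0 ^ d = linSubst M (X 0 ^ d)) :
    ∃ u : Rˣ, u ^ d = 1 ∧ M 0 = Pi.single 0 (u : R) := by
  -- Evaluating at the `k`-th unit vector isolates the entry `M 0 k`.
  have hentry (k : Fin (n + 1)) : M 0 k ^ d = (Pi.single k 1 : Fin (n + 1) → R) 0 ^ d :=
    calc
      M 0 k ^ d = aeval (fun j => M j k) (X 0 ^ d : MvPolynomial (Fin (m + 1)) R) := by simp
      _ = aeval (Pi.single k 1 : Fin (n + 1) → R) (linSubst M (X 0 ^ d)) :=
        (aeval_single_linSubst M k _).symm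
      _ = (Pi.single k 1 : Fin (n + 1) → R) 0 ^ d := by rw [← h]; simp
  have hcorner : M 0 0 ^ d = 1 := by simpa using hentry 0
  refine ⟨Units.ofPowEqOne _ d hcorner hd, Units.pow_ofPowEqOne hcorner hd, ?_⟩
  ext k
  cases k using Fin.cases with
  | zero => simp
  | succ k => simpa [hd] using hentry k.succ

theorem affine_IP1S_iff_homogeneous_IP1S_general {R : Type*} [CommRing R] [IsReduced R]
    {ι : Type*} {n d : ℕ} (hd : d ≠ 0) (f g : ι → MvPolynomial (Fin n) R)
    (hf : ∀ i, (f i).totalDegree ≤ d) :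
    (∃ (A : Matrix (Fin n) (Fin n) R) (b : Fin n → R), IsUnit A ∧
        ∀ i, g i = affineSubst A b (f i)) ↔
    (∃ M : Matrix (Fin (n + 1)) (Fin (n + 1)) R, IsUnit M ∧
        X 0 ^ d = linSubst M (X 0 ^ d) ∧
        ∀ i, homogenize d (g i) = linSubst M (homogenize d (f i))) := by
  constructor
  · rintro ⟨A, b, hA, hfg⟩
    refine ⟨affineMatrix A b, isUnit_affineMatrix_iff.mpr hA, ?_, fun i => ?_⟩
    · rw [map_pow, linSubst_affineMatrix_X_zero]
    · exact (homogenize_eq_linSubst_affineMatrix_iff (hf i) _ A b).mpr (hfg i)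
  · rintro ⟨M, hM, hX, hfg⟩
    obtain ⟨u, hu, hrow⟩ := exists_unit_row_zero_of_linSubst_X_zero_pow hd hX
    obtain ⟨A, b, rfl⟩ := exists_eq_smul_affineMatrix hrow
    refine ⟨A, b, isUnit_affineMatrix_iff.mp ((isUnit_smul_iff u _).mp hM), fun i => ?_⟩
    rw [← homogenize_eq_linSubst_affineMatrix_iff (hf i), hfg i, Units.smul_def,
      linSubst_smul_of_isHomogeneous (isHomogeneous_homogenize (hf i)), ← Units.val_pow_eq_pow_val,
      hu, Units.val_one, one_smul]

/-- Affine quadratic IP1S reduces to linear homogeneous quadratic IP1S by adjoining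
the polynomial `x₀²` to both systems. -/
theorem affine_IP1S_iff_homogeneous_IP1S {K : Type*} [Field K] {n m : ℕ}
    (f g : Fin m → MvPolynomial (Fin n) K)
    (hf : ∀ i, (f i).totalDegree ≤ 2) (hg : ∀ i, (g i).totalDegree ≤ 2) :
    (∃ (A : Matrix (Fin n) (Fin n) K) (b : Fin n → K), IsUnit A ∧
        ∀ i, g i = aeval (fun j => (∑ k, C (A j k) * X k) + C (b j)) (f i)) ↔
    (∃ A' : Matrix (Fin (n + 1)) (Fin (n + 1)) K, IsUnit A' ∧
        (X 0 : MvPolynomial (Fin (n + 1)) K) ^ 2 =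
          aeval (fun j => ∑ k, C (A' j k) * X k)
            ((X 0 : MvPolynomial (Fin (n + 1)) K) ^ 2) ∧
        ∀ i, homog2 (g i) = aeval (fun j => ∑ k, C (A' j k) * X k) (homog2 (f i))) := by
  simp only [homog2_eq_homogenize]
  exact affine_IP1S_iff_homogeneous_IP1S_general two_ne_zero f g hf
end

section
/- Let K be a field with char K ≠ 2, let D in K^{n×n} be an invertible symmetric (e.g. diagonal) matrix, and let H_2,...,H_m and H'_2,...,H'_m be matrices in K^{n×n}. For any A in GL_n(K), the following are equivalent: (i) A^T·D·A = D and A^T·H_i·A = H'_i for all 2 ≤ i ≤ m; (ii) A^T·D·A = D and A^{-1}·(D^{-1}·H_i)·A = D^{-1}·H'_i for all 2 ≤ i ≤ m. In particular, simultaneous congruence of the families {D,H_2,...,H_m} and {D,H'_2,...,H'_m} by A is equivalent to A being D-orthogonal together with simultaneous conjugacy of the families {D^{-1}H_i} and {D^{-1}H'_i} by A. -/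
open Matrix

/-! If `B * D * A = D'` with `D'` invertible, then `D'⁻¹ * B = A⁻¹ * D⁻¹`. Hence multiplying
`B * H * A = H'` on the left by `D'⁻¹` gives exactly `A⁻¹ * (D⁻¹ * H) * A = D'⁻¹ * H'`, and the
step is reversible. A simultaneous congruence is the case `B = Aᵀ`. -/

section

variable {R n : Type*} [CommRing R] [Fintype n] [DecidableEq n]

theorem inv_mul_mul_left_eq_inv {B : Matrix n n R} (hB : IsUnit B) (C : Matrix n n R) :
    (B * C)⁻¹ * B = C⁻¹ := by
  rw [Matrix.mul_inv_rev, nonsing_inv_mul_cancel_right _ _ ((isUnit_iff_isUnit_det B).mp hB)]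

theorem mul_mul_eq_iff_conj_inv_mul_eq {A B D D' : Matrix n n R} (hD' : IsUnit D')
    (h : B * D * A = D') (H H' : Matrix n n R) :
    B * H * A = H' ↔ A⁻¹ * (D⁻¹ * H) * A = D'⁻¹ * H' := by
  rw [Matrix.mul_assoc] at h
  have hB : IsUnit B := isUnit_of_mul_isUnit_left (h ▸ hD')
  have inv_mul_left : D'⁻¹ * B = A⁻¹ * D⁻¹ := by
    rw [← h, inv_mul_mul_left_eq_inv hB, Matrix.mul_inv_rev]
  have conj_eq : A⁻¹ * (D⁻¹ * H) * A = D'⁻¹ * (B * H * A) :=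
    calc A⁻¹ * (D⁻¹ * H) * A = A⁻¹ * D⁻¹ * H * A := by rw [← Matrix.mul_assoc A⁻¹]
      _ = D'⁻¹ * B * H * A := by rw [inv_mul_left]
      _ = D'⁻¹ * (B * H * A) := by simp only [Matrix.mul_assoc]
  rw [conj_eq, (isUnit_nonsing_inv_iff.mpr hD').mul_right_inj]

theorem congruence_iff_D_orthogonal_conjugacy_general {ι : Sort*} {D' : Matrix n n R}
    (hD' : IsUnit D') (A B D : Matrix n n R) (H H' : ι → Matrix n n R) :
    (B * D * A = D' ∧ ∀ i, B * H i * A = H' i) ↔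
    (B * D * A = D' ∧ ∀ i, A⁻¹ * (D⁻¹ * H i) * A = D'⁻¹ * H' i) :=
  and_congr_right fun h => forall_congr' fun i => mul_mul_eq_iff_conj_inv_mul_eq hD' h (H i) (H' i)

end

/-- Simultaneous congruence of the families `{D, H₂, …, H_m}` and `{D, H'₂, …, H'_m}`
by `A` is equivalent to `A` being `D`-orthogonal (`AᵀDA = D`) together with
simultaneous conjugacy of the families `{D⁻¹Hᵢ}` and `{D⁻¹H'ᵢ}` by `A`. -/
theorem congruence_iff_D_orthogonal_conjugacy {K : Type*} [Field K]
    (hchar : ringChar K ≠ 2) {n : ℕ} {ι : Type*}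
    (D : Matrix (Fin n) (Fin n) K) (hD : IsUnit D) (hDsym : D.IsSymm)
    (H H' : ι → Matrix (Fin n) (Fin n) K)
    (A : Matrix (Fin n) (Fin n) K) (hA : IsUnit A) :
    (Aᵀ * D * A = D ∧ ∀ i, Aᵀ * H i * A = H' i) ↔
    (Aᵀ * D * A = D ∧ ∀ i, A⁻¹ * (D⁻¹ * H i) * A = D⁻¹ * H' i) :=
  congruence_iff_D_orthogonal_conjugacy_general hD A Aᵀ D H H'
end

section
/- Let F be an algebraically closed field with char F ≠ 2 and let Z in F^{n×n} be an invertible matrix. Then there exists a polynomial q in F[X] such that the matrix W = q(Z) satisfies W^2 = Z. In other words, every invertible matrix over an algebraically closed field of characteristic different from 2 has a square root which is a polynomial in the matrix itself. -/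
/-!
Let `k` be invertible in a separably closed field `F`. Every residue field of the finite
`F`-algebra `F[z]` is algebraic over `F`, hence again separably closed, and so contains a `k`-th
root of the image of `z`. By the Chinese remainder theorem these roots come from one element
`x ∈ F[z]`, for which `x ^ k - z` is nilpotent. As `z` is a unit, so is `k * x ^ (k - 1)`, and
Newton's iteration started at `x` reaches an exact `k`-th root of `z` after finitely many steps;
it plays the role of the Taylor expansion of the root on each Jordan block.
-/

open Polynomial
open scoped nonZeroDivisors

section CommRing

variable {R : Type*} [CommRing R] {u : R} {k : ℕ}

theorem exists_pow_eq_of_isNilpotent_pow_sub {x : R} (hk : IsUnit (k : R)) (hu : IsUnit u)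
    (hx : IsNilpotent (x ^ k - u)) : ∃ y, y ^ k = u := by
  have hxk : IsUnit (x ^ k) := by
    simpa only [add_sub_cancel] using hx.isUnit_add_left_of_commute hu (Commute.all _ _)
  have hxk' : IsUnit (x ^ (k - 1)) := isUnit_of_dvd_unit (pow_dvd_pow x (k.sub_le 1)) hxk
  obtain ⟨y, ⟨-, hy⟩, -⟩ :=
    existsUnique_nilpotent_sub_and_aeval_eq_zero (P := X ^ k - C u) (x := x)
      (by simpa using hx) (by simpa [derivative_X_pow] using And.intro hk hxk')
  exact ⟨y, by simpa [sub_eq_zero] using hy⟩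

variable [IsArtinianRing R]

theorem exists_isNilpotent_pow_sub_of_forall_maximalSpectrum
    (h : ∀ m : MaximalSpectrum R, ∃ y : R ⧸ m.asIdeal, y ^ k = Ideal.Quotient.mk m.asIdeal u) :
    ∃ x : R, IsNilpotent (x ^ k - u) := by
  choose y hy using h
  obtain ⟨x', hx'⟩ := (IsArtinianRing.quotNilradicalEquivPi R).surjective y
  obtain ⟨x, rfl⟩ := Ideal.Quotient.mk_surjective x'
  refine ⟨x, ?_⟩
  rw [← mem_nilradical, IsArtinianRing.nilradical_eq_iInf, Ideal.mem_iInf]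
  intro m
  have hxm : Ideal.Quotient.mk m.asIdeal x = y m := congrFun hx' m
  rw [← Ideal.Quotient.eq, map_pow, hxm, hy]

theorem exists_pow_eq_of_isUnit_of_isSepClosed (F : Type*) [Field F] [IsSepClosed F]
    [Algebra F R] [Algebra.IsIntegral F R] [NeZero (k : F)] (hu : IsUnit u) :
    ∃ y, y ^ k = u := by
  have hk : IsUnit (k : R) := by
    simpa using (IsUnit.mk0 (k : F) (NeZero.ne _)).map (algebraMap F R)
  obtain ⟨x, hx⟩ : ∃ x : R, IsNilpotent (x ^ k - u) := by
    refine exists_isNilpotent_pow_sub_of_forall_maximalSpectrum fun m ↦ ?_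
    let := Ideal.Quotient.field m.asIdeal
    have : IsSepClosed (R ⧸ m.asIdeal) := Algebra.IsAlgebraic.isSepClosed (F := F)
    have : NeZero (k : R ⧸ m.asIdeal) := NeZero.nat_of_injective (algebraMap F _).injective
    exact IsSepClosed.exists_pow_nat_eq _ k
  exact exists_pow_eq_of_isNilpotent_pow_sub hk hu hx

end CommRing

section IsIntegral

variable {R A : Type*} [CommRing R] [IsArtinianRing R] [Ring A] [Algebra R A] {z : A}

theorem isArtinianRing_adjoin_singleton (hz : IsIntegral R z) :
    IsArtinianRing (Algebra.adjoin R {z}) :=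
  have := Algebra.finite_adjoin_simple_of_isIntegral hz
  isArtinian_of_tower R inferInstance

theorem isUnit_self_adjoin_singleton (hz : IsIntegral R z) (hz' : z ∈ A⁰) :
    IsUnit (⟨z, Algebra.self_mem_adjoin_singleton R z⟩ : Algebra.adjoin R {z}) :=
  have := isArtinianRing_adjoin_singleton hz
  IsArtinianRing.isUnit_of_mem_nonZeroDivisors <|
    comap_nonZeroDivisors_le_of_injective (f := (Algebra.adjoin R {z}).subtype)
      Subtype.val_injective hz'

end IsIntegral

theorem exists_sqrt_polynomial_in_matrix_general {F A : Type*} [Field F] [IsSepClosed F]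
    [Ring A] [Algebra F A] {k : ℕ} [NeZero (k : F)] {z : A}
    (hz : IsIntegral F z) (hu : IsUnit z) : ∃ q : F[X], aeval z q ^ k = z := by
  have := Algebra.finite_adjoin_simple_of_isIntegral hz
  have := isArtinianRing_adjoin_singleton hz
  have hu' := isUnit_self_adjoin_singleton hz hu.mem_nonZeroDivisors
  obtain ⟨⟨w, hw⟩, hwz⟩ := exists_pow_eq_of_isUnit_of_isSepClosed F (k := k) hu'
  obtain ⟨q, rfl⟩ := Algebra.adjoin_singleton_eq_range_aeval F z ▸ hw
  exact ⟨q, congrArg Subtype.val hwz⟩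

/-- Every invertible matrix over an algebraically closed field of characteristic
different from 2 has a square root which is a polynomial in the matrix itself. -/
theorem exists_sqrt_polynomial_in_matrix {F : Type*} [Field F] [IsAlgClosed F]
    (hchar : ringChar F ≠ 2) {n : ℕ}
    (Z : Matrix (Fin n) (Fin n) F) (hZ : IsUnit Z) :
    ∃ q : Polynomial F, (Polynomial.aeval Z q) ^ 2 = Z := by
  have : NeZero ((2 : ℕ) : F) := ⟨by exact_mod_cast Ring.two_ne_zero hchar⟩
  exact exists_sqrt_polynomial_in_matrix_general Z.isIntegral hZ
end

section
/- Let K be a field with char K = 2, let ζ be an element of K, and let d ≥ 2. Then the Jordan block J_{ζ,d} has no square root: there is no matrix W in K^{d×d} with W^2 = J_{ζ,d}. -/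
/-- The Jordan block of size `s` with eigenvalue `ζ`: `ζ` on the diagonal, `1` on the
superdiagonal, `0` elsewhere. -/
def jordanBlock {L : Type*} [Field L] (ζ : L) (s : ℕ) : Matrix (Fin s) (Fin s) L :=
  Matrix.of fun i j =>
    if (j : ℕ) = (i : ℕ) then ζ else if (j : ℕ) = (i : ℕ) + 1 then 1 else 0

/-!
After adjoining a `p`-th root `ξ` of `ζ`, the Frobenius identity `(W - ξ) ^ p = W ^ p - ζ` turns a
`p`-th root `W` of the Jordan block with eigenvalue `ζ` into a `p`-th root of the nilpotent block
`N` of the same size `d`. A root `M` of `N` is nilpotent, so `M ^ d = 0`; as `p * (d - 1) ≥ d`,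
this forces `N ^ (d - 1) = M ^ (p * (d - 1)) = 0`, whereas `N` has nilpotency index exactly `d`.
-/

theorem matrix_pow_card_eq_zero_of_isNilpotent {R n : Type*} [CommRing R] [IsReduced R]
    [Fintype n] [DecidableEq n] {M : Matrix n n R} (hM : IsNilpotent M) :
    M ^ Fintype.card n = 0 := by
  have : IsReduced (Polynomial R) := by
    simp [isReduced_iff, Polynomial.isNilpotent_iff, Polynomial.ext_iff]
  have charpoly_eq : M.charpoly = Polynomial.X ^ Fintype.card n :=
    sub_eq_zero.mp (Matrix.isNilpotent_charpoly_sub_pow_of_isNilpotent hM).eq_zero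
  simpa [charpoly_eq] using M.aeval_self_charpoly

section JordanBlock

variable {K L : Type*} [Field K] [Field L] {d : ℕ}

theorem jordanBlock_map (f : K →+* L) (ζ : K) (d : ℕ) :
    (jordanBlock ζ d).map f = jordanBlock (f ζ) d := by
  ext i j
  simp [jordanBlock, apply_ite f]

theorem jordanBlock_sub_scalar (ζ ξ : K) (d : ℕ) :
    jordanBlock ζ d - Matrix.scalar (Fin d) ξ = jordanBlock (ζ - ξ) d := by
  ext i j
  obtain rfl | hij := eq_or_ne i j
  · simp [jordanBlock]
  · simp [jordanBlock, hij, Fin.val_ne_of_ne hij.symm]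

theorem jordanBlock_zero_pow_apply (k : ℕ) (i j : Fin d) :
    (jordanBlock (0 : K) d ^ k) i j = if (j : ℕ) = i + k then 1 else 0 := by
  induction k generalizing j with
  | zero => simp [Matrix.one_apply, Fin.ext_iff, eq_comm]
  | succ k ih =>
    have entry (l : Fin d) : jordanBlock (0 : K) d l j = if (j : ℕ) = l + 1 then 1 else 0 := by
      simp only [jordanBlock, Matrix.of_apply]
      grind
    simp only [pow_succ, Matrix.mul_apply, ih, entry, ite_mul, one_mul, zero_mul]
    by_cases hk : (i : ℕ) + k < d
    · rw [Finset.sum_eq_single ⟨i + k, hk⟩] <;> grind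
    · rw [Finset.sum_eq_zero] <;> grind

theorem isNilpotent_jordanBlock_zero (d : ℕ) : IsNilpotent (jordanBlock (0 : K) d) := by
  refine ⟨d, ?_⟩
  ext i j
  rw [jordanBlock_zero_pow_apply, if_neg (by lia), Matrix.zero_apply]

theorem jordanBlock_zero_pow_ne_zero {k : ℕ} (hk : k < d) : jordanBlock (0 : K) d ^ k ≠ 0 := by
  intro h
  have corner := jordanBlock_zero_pow_apply (K := K) k (⟨0, by lia⟩ : Fin d) ⟨k, hk⟩
  simp [h] at corner

theorem pow_ne_jordanBlock_zero {n : ℕ} (hn : 2 ≤ n) (hd : 2 ≤ d)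
    (M : Matrix (Fin d) (Fin d) K) : M ^ n ≠ jordanBlock 0 d := by
  intro h
  have nilpotent : IsNilpotent (M ^ n) := h ▸ isNilpotent_jordanBlock_zero d
  have pow_d : M ^ d = 0 := by
    simpa using matrix_pow_card_eq_zero_of_isNilpotent nilpotent.of_pow
  have le_mul : d ≤ n * (d - 1) := calc
    d ≤ 2 * (d - 1) := by lia
    _ ≤ n * (d - 1) := Nat.mul_le_mul_right _ hn
  refine jordanBlock_zero_pow_ne_zero (K := K) (Nat.sub_one_lt_of_lt hd) ?_
  rw [← h, ← pow_mul, pow_eq_zero_of_le le_mul pow_d]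

theorem sub_scalar_pow_char_eq_jordanBlock (p : ℕ) [Fact p.Prime] [CharP K p] {ζ : K}
    {W : Matrix (Fin d) (Fin d) K} (hW : W ^ p = jordanBlock ζ d) (ξ : K) :
    (W - Matrix.scalar (Fin d) ξ) ^ p = jordanBlock (ζ - ξ ^ p) d := by
  obtain _ | _ := isEmpty_or_nonempty (Fin d)
  · exact Subsingleton.elim _ _
  · have commute : Commute W (Matrix.scalar (Fin d) ξ) :=
      (Matrix.scalar_commute ξ (Commute.all ξ) W).symm
    rw [sub_pow_char_of_commute p commute, hW, ← map_pow, jordanBlock_sub_scalar]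

end JordanBlock

theorem char_two_jordanBlock_no_sqrt_general {K : Type*} [Field K] (p : ℕ) [Fact p.Prime]
    [CharP K p] (ζ : K) {d : ℕ} (hd : 2 ≤ d) :
    ¬ ∃ W : Matrix (Fin d) (Fin d) K, W ^ p = jordanBlock ζ d := by
  rintro ⟨W, hW⟩
  have hp : p.Prime := Fact.out
  let f := algebraMap K (AlgebraicClosure K)
  obtain ⟨ξ, hξ⟩ : ∃ ξ, ξ ^ p = f ζ := IsAlgClosed.exists_pow_nat_eq _ hp.pos
  have root : W.map f ^ p = jordanBlock (f ζ) d := by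
    rw [← Matrix.map_pow, hW, jordanBlock_map]
  have nilpotent_root := sub_scalar_pow_char_eq_jordanBlock p root ξ
  rw [hξ, sub_self] at nilpotent_root
  exact pow_ne_jordanBlock_zero hp.two_le hd _ nilpotent_root

/-- Over a field of characteristic 2, a Jordan block of size at least 2 has no
square root. -/
theorem char_two_jordanBlock_no_sqrt {K : Type*} [Field K]
    (hchar : ringChar K = 2) (ζ : K) {d : ℕ} (hd : 2 ≤ d) :
    ¬ ∃ W : Matrix (Fin d) (Fin d) K, W ^ 2 = jordanBlock ζ d := by
  have : CharP K 2 := ringChar.of_eq hchar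
  exact char_two_jordanBlock_no_sqrt_general 2 ζ hd
end

section
/- Let F be an algebraically closed field with char F = 2 and let Z in F^{n×n} be an invertible matrix. Then there exists a polynomial q in F[X] with (q(Z))^2 = Z if and only if Z is diagonalizable (i.e. there exists T in GL_n(F) such that T^{-1}·Z·T is diagonal). -/
open Matrix

/-!
If `q(f) ^ p = f` in characteristic `p`, then `f` is annihilated by `q ^ p - X`, whose derivative
is the unit `-1`. So `f` has a separable annihilating polynomial, hence is semisimple, and over an
algebraically closed field its eigenspaces span. Conversely, when the eigenspaces span, a
polynomial interpolating `p`-th roots at the finitely many eigenvalues gives `q`.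
-/

section Endomorphism

open Polynomial Module

theorem separable_pow_char_sub_X {R : Type*} [CommRing R] (p : ℕ) [CharP R p] (q : R[X]) :
    (q ^ p - X).Separable :=
  ⟨0, -1, by simp [derivative_pow]⟩

variable {K V : Type*} [Field K] [AddCommGroup V] [Module K V] {f : End K V}

theorem isSemisimple_of_aeval_pow_char_eq {p : ℕ} [CharP K p] {q : K[X]}
    (hq : aeval f q ^ p = f) : f.IsSemisimple :=
  End.isSemisimple_of_squarefree_aeval_eq_zero (separable_pow_char_sub_X p q).squarefree
    (by simp [hq])

theorem exists_aeval_pow_eq_of_iSup_eigenspace_eq_top [FiniteDimensional K V] {k : ℕ}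
    (hf : ⨆ μ, f.eigenspace μ = ⊤) (hroot : ∀ μ, f.HasEigenvalue μ → ∃ r, r ^ k = μ) :
    ∃ q : K[X], aeval f q ^ k = f := by
  classical
  choose! r hr using hroot
  let q := Lagrange.interpolate f.finite_hasEigenvalue.toFinset id r
  have hq : ∀ μ, f.HasEigenvalue μ → q.eval μ = r μ := fun μ hμ ↦
    Lagrange.eval_interpolate_at_node r (Set.injOn_id _) (by simpa using hμ)
  refine ⟨q, LinearMap.eqLocus_eq_top.mp <| top_le_iff.mp <| hf.ge.trans <| iSup_le fun μ v hv ↦ ?_⟩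
  obtain rfl | hv0 := eq_or_ne v 0
  · exact zero_mem _
  have hvec : f.HasEigenvector μ v := ⟨hv, hv0⟩
  have hμ : f.HasEigenvalue μ := End.hasEigenvalue_of_hasEigenvector hvec
  calc (aeval f q ^ k) v = aeval f (q ^ k) v := by rw [map_pow]
    _ = (q ^ k).eval μ • v := End.aeval_apply_of_hasEigenvector hvec
    _ = μ • v := by rw [eval_pow, hq μ hμ, hr μ hμ]
    _ = f v := hvec.apply_eq_smul.symm

theorem exists_aeval_pow_char_eq_iff_iSup_eigenspace_eq_top [IsAlgClosed K]
    [FiniteDimensional K V] (p : ℕ) [Fact p.Prime] [CharP K p] :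
    (∃ q : K[X], aeval f q ^ p = f) ↔ ⨆ μ, f.eigenspace μ = ⊤ :=
  ⟨fun ⟨_, hq⟩ ↦ (isSemisimple_of_aeval_pow_char_eq hq).iSup_eigenspace_eq_top,
    fun hf ↦ exists_aeval_pow_eq_of_iSup_eigenspace_eq_top hf fun μ _ ↦
      IsAlgClosed.exists_pow_nat_eq μ (Fact.out : p.Prime).pos⟩

theorem iSup_eigenspace_eq_top_iff_exists_basis {ι : Type*} (e : Basis ι K V) :
    ⨆ μ, f.eigenspace μ = ⊤ ↔ ∃ (b : Basis ι K V) (d : ι → K), ∀ i, f (b i) = d i • b i := by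
  constructor
  · intro hf
    have hspan : ⊤ ≤ Submodule.span K (⋃ μ, (f.eigenspace μ : Set V)) := by
      simp [Submodule.span_iUnion, hf]
    let b := Basis.ofSpan hspan
    have hb : ∀ j, ∃ μ, f (b j) = μ • b j := fun j ↦
      (Set.mem_iUnion.mp (Basis.ofSpan_subset hspan ⟨j, rfl⟩)).imp fun _ ↦
        End.mem_eigenspace_iff.mp
    choose d hd using hb
    exact ⟨b.reindex (b.indexEquiv e), d ∘ (b.indexEquiv e).symm, fun i ↦ by simp [hd]⟩
  · rintro ⟨b, d, hb⟩
    rw [eq_top_iff, ← b.span_eq, Submodule.span_le, Set.range_subset_iff]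
    exact fun i ↦ Submodule.mem_iSup_of_mem (d i) (End.mem_eigenspace_iff.mpr (hb i))

end Endomorphism

section Matrix

variable {n : Type*} [Fintype n] [DecidableEq n]

theorem isDiag_inv_mul_mul_iff_exists_mulVec_col {R : Type*} [CommRing R] {Z T : Matrix n n R}
    (hT : IsUnit T) :
    (T⁻¹ * Z * T).IsDiag ↔ ∃ d : n → R, ∀ i, Z *ᵥ T.col i = d i • T.col i := by
  have := hT.invertible
  calc (T⁻¹ * Z * T).IsDiag ↔ ∃ d, T⁻¹ * (Z * T) = diagonal d := by
        rw [Matrix.mul_assoc]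
        exact ⟨fun h ↦ ⟨_, h.diagonal_diag.symm⟩, fun ⟨d, hd⟩ ↦ hd ▸ isDiag_diagonal d⟩
    _ ↔ ∃ d, Z * T = T * diagonal d := by simp only [inv_mul_eq_iff_eq_mul_of_invertible]
    _ ↔ ∃ d : n → R, ∀ i, Z *ᵥ T.col i = d i • T.col i := by
        refine exists_congr fun d ↦ ?_
        have hcol (i : n) : (T * diagonal d).col i = d i • T.col i := by
          ext j
          simp [mul_comm]
        simp only [← hcol]
        exact ⟨fun h i ↦ congrArg (·.col i) h, ext_col⟩

variable {K : Type*} [Field K] (Z : Matrix n n K)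

theorem exists_isUnit_isDiag_iff_exists_basis :
    (∃ T : Matrix n n K, IsUnit T ∧ (T⁻¹ * Z * T).IsDiag) ↔
      ∃ (b : Module.Basis n K (n → K)) (d : n → K), ∀ i, Z *ᵥ b i = d i • b i := by
  constructor
  · rintro ⟨T, hT, hdiag⟩
    obtain ⟨d, hd⟩ := (isDiag_inv_mul_mul_iff_exists_mulVec_col hT).mp hdiag
    have hli : LinearIndependent K T.col := linearIndependent_cols_iff_isUnit.mpr hT
    have hspan : Submodule.span K (Set.range T.col) = ⊤ :=
      hli.span_eq_top_of_card_eq_finrank' (by simp)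
    exact ⟨.mk hli hspan.ge, d, by simpa using hd⟩
  · rintro ⟨b, d, hb⟩
    have hT : IsUnit (of b)ᵀ := linearIndependent_cols_iff_isUnit.mp b.linearIndependent
    exact ⟨(of b)ᵀ, hT, (isDiag_inv_mul_mul_iff_exists_mulVec_col hT).mpr ⟨d, hb⟩⟩

theorem exists_isUnit_isDiag_iff_iSup_eigenspace_eq_top :
    (∃ T : Matrix n n K, IsUnit T ∧ (T⁻¹ * Z * T).IsDiag) ↔
      ⨆ μ, Module.End.eigenspace (toLinAlgEquiv' Z) μ = ⊤ := by
  rw [exists_isUnit_isDiag_iff_exists_basis,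
    iSup_eigenspace_eq_top_iff_exists_basis (Pi.basisFun K n)]
  simp only [toLinAlgEquiv'_apply]

theorem char_two_sqrt_poly_iff_diagonalizable_general [IsAlgClosed K] (p : ℕ) [Fact p.Prime]
    [CharP K p] :
    (∃ q : Polynomial K, Polynomial.aeval Z q ^ p = Z) ↔
      ∃ T : Matrix n n K, IsUnit T ∧ (T⁻¹ * Z * T).IsDiag := by
  rw [exists_isUnit_isDiag_iff_iSup_eigenspace_eq_top,
    ← exists_aeval_pow_char_eq_iff_iSup_eigenspace_eq_top p]
  refine exists_congr fun q ↦ ?_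
  rw [Polynomial.aeval_algHom_apply, ← map_pow toLinAlgEquiv', EmbeddingLike.apply_eq_iff_eq]

end Matrix

/-- Over an algebraically closed field of characteristic 2, an invertible matrix has
a square root which is a polynomial in the matrix if and only if it is
diagonalizable. -/
theorem char_two_sqrt_poly_iff_diagonalizable {F : Type*} [Field F] [IsAlgClosed F]
    (hchar : ringChar F = 2) {n : ℕ}
    (Z : Matrix (Fin n) (Fin n) F) (hZ : IsUnit Z) :
    (∃ q : Polynomial F, (Polynomial.aeval Z q) ^ 2 = Z) ↔
    (∃ T : Matrix (Fin n) (Fin n) F, IsUnit T ∧ (T⁻¹ * Z * T).IsDiag) :=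
  have : CharP F 2 := ringChar.of_eq hchar
  char_two_sqrt_poly_iff_diagonalizable_general Z 2
end

section
/- Let K be a field, let P be a monic irreducible polynomial of degree d over K, and let Q be a monic polynomial of degree d over K such that P(X^2) = (−1)^d · Q(X) · Q(−X) in K[X]. Then the characteristic polynomial of C(Q)^2 equals P, and consequently C(Q)^2 is similar over K to the companion matrix C(P): there exists T in GL_d(K) with T^{-1}·C(Q)^2·T = C(P). -/
open Polynomial Matrix

/-- The companion matrix of a (monic, degree `d`) polynomial `R`: `1` on the
subdiagonal, last column `(−r₀, …, −r_{d−1})ᵀ`, `0` elsewhere. -/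
def companionMatrix {K : Type*} [Field K] (d : ℕ) (R : Polynomial K) :
    Matrix (Fin d) (Fin d) K :=
  Matrix.of fun i j =>
    if (i : ℕ) = (j : ℕ) + 1 then 1
    else if (j : ℕ) = d - 1 then -(R.coeff i) else 0

/-!
Over any commutative ring, `det (X² - A²) = det (X + A) · det (X - A)`, so `χ_{A²}(X²)` equals
`(-1)ⁿ · χ_A(X) · χ_A(-X)`; for `A = C(Q)` this is `P(X²)`, hence `χ_{A²} = P`.

For the similarity, let `T` be the Krylov matrix with columns `v, Mv, …, M^{d-1}v`. Cayley–Hamilton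
gives `M T = T C(χ_M)`. For `M = C(R)` and `v = e₀` one has `T = 1`, whence `C(R) = C(χ_{C(R)})`
and `χ_{C(R)} = R`. When `χ_M` is irreducible and `v ≠ 0`, a nonzero polynomial of degree less
than `d` is coprime to `χ_M` and so cannot annihilate `v`, which makes `T` invertible.
-/

section Polynomial

variable {R : Type*} [Semiring R] [DecidableEq R]

lemma ofFn_toFn_add_X_pow {p : R[X]} (hp : p.Monic) {d : ℕ} (hd : p.natDegree = d) :
    ofFn d (toFn d p) + X ^ d = p := by
  subst hd
  conv_rhs => rw [hp.as_sum, add_comm, Finset.sum_range]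
  simp only [ofFn_eq_sum_monomial, toFn, LinearMap.pi_apply, lcoeff_apply, C_mul_X_pow_eq_monomial]

end Polynomial

section Charpoly

variable {n R : Type*} [Fintype n] [DecidableEq n] [CommRing R]

lemma charpoly_comp_eq_det (A : Matrix n n R) (q : R[X]) :
    A.charpoly.comp q = (scalar n q - A.map C).det := by
  rw [← eval_charpoly, charpoly_map, eval_map, Polynomial.comp]

lemma charpoly_sq_comp_X_sq (A : Matrix n n R) :
    (A ^ 2).charpoly.comp (X ^ 2) =
      (-1) ^ Fintype.card n * (A.charpoly * A.charpoly.comp (-X)) := by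
  set B : Matrix n n R[X] := A.map C
  have hsq : (A ^ 2).map C = B ^ 2 := by
    simp only [← RingHom.mapMatrix_apply, map_pow, B]
  have hfactor : scalar n (X ^ 2) - B ^ 2 = -(scalar n (-X) - B) * (scalar n X - B) := by
    have hcomm : Commute (scalar n X) B := scalar_commute _ (Commute.all _) _
    rw [map_pow, hcomm.sq_sub_sq, map_neg, neg_sub, sub_neg_eq_add, add_comm B]
  calc (A ^ 2).charpoly.comp (X ^ 2)
      = (-(scalar n (-X) - B)).det * (scalar n X - B).det := by
        rw [charpoly_comp_eq_det, hsq, hfactor, det_mul]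
    _ = (-1) ^ Fintype.card n * A.charpoly.comp (-X) * A.charpoly := by
        rw [det_neg, ← charpoly_comp_eq_det, ← charpoly_comp_eq_det, comp_X]
    _ = (-1) ^ Fintype.card n * (A.charpoly * A.charpoly.comp (-X)) := by ring

end Charpoly

section Companion

variable {K : Type*} [Field K] {d : ℕ}

lemma companionMatrix_col_of_succ_lt (P : K[X]) {j : Fin d} (hj : j + 1 < d) :
    (companionMatrix d P).col j = Pi.single ⟨j + 1, hj⟩ 1 := by
  have hlast : (j : ℕ) ≠ d - 1 := by lia
  ext i
  simp [companionMatrix, hlast, Pi.single_apply, Fin.ext_iff]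

lemma companionMatrix_col_of_succ_eq (P : K[X]) {j : Fin d} (hj : j + 1 = d) :
    (companionMatrix d P).col j = -toFn d P := by
  ext i
  have hsub : (i : ℕ) ≠ j + 1 := by lia
  have hlast : (j : ℕ) = d - 1 := by lia
  simp [companionMatrix, hsub, if_pos hlast, toFn]

lemma eq_of_companionMatrix_eq {P Q : K[X]} (hP : P.Monic) (hPd : P.natDegree = d)
    (hQ : Q.Monic) (hQd : Q.natDegree = d) (h : companionMatrix d P = companionMatrix d Q) :
    P = Q := by
  classical
  have hcoeff : toFn d P = toFn d Q := by
    obtain _ | d := d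
    · exact Subsingleton.elim _ _
    · have hlast : ((Fin.last d : Fin (d + 1)) : ℕ) + 1 = d + 1 := rfl
      rw [← neg_inj, ← companionMatrix_col_of_succ_eq P hlast, h,
        companionMatrix_col_of_succ_eq Q hlast]
  rw [← ofFn_toFn_add_X_pow hP hPd, hcoeff, ofFn_toFn_add_X_pow hQ hQd]

end Companion

section Krylov

variable {n R : Type*} [Fintype n] [DecidableEq n] [CommSemiring R]

/-- The Krylov matrix of `M` at `v`: the `d` columns `v, M v, …, M ^ (d - 1) v`. It is the change of
basis that brings `M` to companion form when these columns are a basis. -/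
def krylovMatrix (M : Matrix n n R) (v : n → R) (d : ℕ) : Matrix n (Fin d) R :=
  .of fun i j => (M ^ (j : ℕ) *ᵥ v) i

lemma krylovMatrix_col (M : Matrix n n R) (v : n → R) {d : ℕ} (j : Fin d) :
    (krylovMatrix M v d).col j = M ^ (j : ℕ) *ᵥ v :=
  rfl

lemma krylovMatrix_mulVec [DecidableEq R] (M : Matrix n n R) (v : n → R) {d : ℕ} (c : Fin d → R) :
    krylovMatrix M v d *ᵥ c = aeval M (ofFn d c) *ᵥ v := by
  calc krylovMatrix M v d *ᵥ c
      = ∑ j : Fin d, c j • (M ^ (j : ℕ) *ᵥ v) := by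
        simp only [mulVec_eq_sum c, op_smul_eq_smul]
        rfl
    _ = aeval M (ofFn d c) *ᵥ v := by
        simp only [ofFn_eq_sum_monomial, map_sum, aeval_monomial, ← Algebra.smul_def, sum_mulVec,
          smul_mulVec]

variable {K : Type*} [Field K] {d : ℕ}

lemma mul_krylovMatrix_eq_mul_companionMatrix (M : Matrix n n K) (v : n → K) {P : K[X]}
    (hP : P.Monic) (hd : P.natDegree = d) (hMv : aeval M P *ᵥ v = 0) :
    M * krylovMatrix M v d = krylovMatrix M v d * companionMatrix d P := by
  classical
  have hpow : M ^ d *ᵥ v = -(krylovMatrix M v d *ᵥ toFn d P) := by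
    rw [← ofFn_toFn_add_X_pow hP hd, map_add, add_mulVec, ← krylovMatrix_mulVec, map_pow,
      aeval_X] at hMv
    exact eq_neg_of_add_eq_zero_right hMv
  refine ext_col fun j => ?_
  suffices M ^ ((j : ℕ) + 1) *ᵥ v = krylovMatrix M v d *ᵥ (companionMatrix d P).col j by
    rwa [pow_succ', ← mulVec_mulVec] at this
  obtain hj | hj := lt_or_eq_of_le (show (j : ℕ) + 1 ≤ d from j.isLt)
  · rw [companionMatrix_col_of_succ_lt P hj, mulVec_single_one, krylovMatrix_col]
  · rw [companionMatrix_col_of_succ_eq P hj, mulVec_neg, ← hpow, hj]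

lemma krylovMatrix_companionMatrix_single_zero [NeZero d] (P : K[X]) :
    krylovMatrix (companionMatrix d P) (Pi.single 0 1) d = 1 := by
  have hpow (j : ℕ) (hj : j < d) :
      companionMatrix d P ^ j *ᵥ Pi.single 0 1 = Pi.single ⟨j, hj⟩ 1 := by
    induction j with
    | zero => rw [pow_zero, one_mulVec]; rfl
    | succ j ih =>
      rw [pow_succ', ← mulVec_mulVec, ih (by lia), mulVec_single_one]
      exact companionMatrix_col_of_succ_lt P hj
  refine ext_col fun j => ?_
  rw [krylovMatrix_col, hpow j j.isLt, ← mulVec_single_one, one_mulVec]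

theorem charpoly_companionMatrix {P : K[X]} (hP : P.Monic) (hd : P.natDegree = d) :
    (companionMatrix d P).charpoly = P := by
  set A := companionMatrix d P
  have hdeg : A.charpoly.natDegree = d := by rw [charpoly_natDegree_eq_dim, Fintype.card_fin]
  refine eq_of_companionMatrix_eq A.charpoly_monic hdeg hP hd ?_
  obtain rfl | hd0 := eq_or_ne d 0
  · exact Subsingleton.elim _ _
  have : NeZero d := ⟨hd0⟩
  have hconj := mul_krylovMatrix_eq_mul_companionMatrix A (Pi.single 0 1) A.charpoly_monic hdeg
    (by rw [aeval_self_charpoly, zero_mulVec])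
  rw [krylovMatrix_companionMatrix_single_zero, mul_one, one_mul] at hconj
  exact hconj.symm

lemma eq_zero_of_aeval_mulVec_eq_zero_of_degree_lt {M : Matrix n n K} {v : n → K}
    (hv : v ≠ 0) {P : K[X]} (hP : Irreducible P) (hMv : aeval M P *ᵥ v = 0) {f : K[X]}
    (hf : f.degree < P.degree) (hfv : aeval M f *ᵥ v = 0) : f = 0 := by
  by_contra hf0
  obtain ⟨a, b, hab⟩ : IsCoprime P f :=
    hP.coprime_iff_not_dvd.2 fun hdvd => (degree_le_of_dvd hdvd hf0).not_gt hf
  refine hv ?_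
  calc v = aeval M (a * P + b * f) *ᵥ v := by rw [hab, map_one, one_mulVec]
    _ = 0 := by
      rw [map_add, map_mul, map_mul, add_mulVec, ← mulVec_mulVec, ← mulVec_mulVec, hMv, hfv,
        mulVec_zero, mulVec_zero, add_zero]

lemma krylovMatrix_mulVec_injective {M : Matrix n n K} {v : n → K} (hv : v ≠ 0) {P : K[X]}
    (hP : Irreducible P) (hd : P.natDegree = d) (hMv : aeval M P *ᵥ v = 0) :
    Function.Injective (krylovMatrix M v d).mulVec := by
  classical
  refine (injective_iff_map_eq_zero (krylovMatrix M v d).mulVecLin).2 fun c hc => ?_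
  rw [mulVecLin_apply, krylovMatrix_mulVec] at hc
  have hdeg : (ofFn d c).degree < P.degree := by
    rw [degree_eq_natDegree hP.ne_zero, hd]
    exact ofFn_degree_lt c
  exact (map_eq_zero_iff _ (injective_ofFn d)).1 <|
    eq_zero_of_aeval_mulVec_eq_zero_of_degree_lt hv hP hMv hdeg hc

theorem exists_conj_eq_companionMatrix_charpoly {M : Matrix (Fin d) (Fin d) K}
    (hM : Irreducible M.charpoly) :
    ∃ T : Matrix (Fin d) (Fin d) K, IsUnit T ∧ T⁻¹ * M * T = companionMatrix d M.charpoly := by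
  have hdeg : M.charpoly.natDegree = d := by rw [charpoly_natDegree_eq_dim, Fintype.card_fin]
  have : NeZero d := ⟨fun hd => hM.natDegree_pos.ne' (hdeg.trans hd)⟩
  obtain ⟨v, hv⟩ := exists_ne (0 : Fin d → K)
  have hMv : aeval M M.charpoly *ᵥ v = 0 := by rw [aeval_self_charpoly, zero_mulVec]
  have hunit : IsUnit (krylovMatrix M v d) :=
    mulVec_injective_iff_isUnit.1 (krylovMatrix_mulVec_injective hv hM hdeg hMv)
  refine ⟨krylovMatrix M v d, hunit, ?_⟩
  rw [mul_assoc, mul_krylovMatrix_eq_mul_companionMatrix M v M.charpoly_monic hdeg hMv,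
    nonsing_inv_mul_cancel_left _ _ ((isUnit_iff_isUnit_det _).1 hunit)]

end Krylov

theorem charpoly_companionMatrix_sq {K : Type*} [Field K] {d : ℕ} {P Q : K[X]} (hQ : Q.Monic)
    (hd : Q.natDegree = d) (hPQ : P.comp (X ^ 2) = (-1) ^ d * (Q * Q.comp (-X))) :
    (companionMatrix d Q ^ 2).charpoly = P := by
  refine expand_injective two_pos ?_
  rw [expand_eq_comp_X_pow, expand_eq_comp_X_pow, charpoly_sq_comp_X_sq,
    charpoly_companionMatrix hQ hd, Fintype.card_fin, hPQ]

/-- If `P` is monic irreducible of degree `d`, `Q` monic of degree `d`, and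
`P(X²) = (−1)^d·Q(X)·Q(−X)`, then the characteristic polynomial of `C(Q)²` is `P`,
and consequently `C(Q)²` is similar over `K` to the companion matrix `C(P)`. -/
theorem companion_sq_similar_companion {K : Type*} [Field K] {d : ℕ} (hd : 0 < d)
    (P Q : Polynomial K) (hP : P.Monic) (hPirr : Irreducible P)
    (hPdeg : P.natDegree = d) (hQ : Q.Monic) (hQdeg : Q.natDegree = d)
    (hPQ : P.comp (Polynomial.X ^ 2) =
      (-1 : Polynomial K) ^ d * (Q * Q.comp (-Polynomial.X))) :
    ((companionMatrix d Q) ^ 2).charpoly = P ∧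
    ∃ T : Matrix (Fin d) (Fin d) K, IsUnit T ∧
      T⁻¹ * (companionMatrix d Q) ^ 2 * T = companionMatrix d P := by
  have hchar : (companionMatrix d Q ^ 2).charpoly = P := charpoly_companionMatrix_sq hQ hQdeg hPQ
  refine ⟨hchar, ?_⟩
  obtain ⟨T, hT, hconj⟩ := exists_conj_eq_companionMatrix_charpoly (hchar ▸ hPirr)
  exact ⟨T, hT, by rw [hconj, hchar]⟩
end
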